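/- Let m ≥ 2 be an integer. For τ ∈ ℍ and u, v, w ∈ ℂ with u−v ∉ Λ_τ, u−w ∉ Λ_τ and v−w ∉ Λ_τ, define φ(u,v,w;τ) = 2πi·∂_τ℘_m(u−v;τ) + m·G₂(τ)·℘_m(u−v;τ) − m·G₂(τ)·(u−v)·℘_{m+1}(u−v;τ) + m·℘_{m+1}(u−v;τ)·( ℘₁(u−w;τ) − ℘₁(v−w;τ) ), where ∂_τ℘_m(z;τ) denotes the complex derivative of the function τ ↦ ℘_m(z;τ) at fixed z. Then φ is elliptic in each of the variables u, v, w: for all (k,l) ∈ ℤ² (whenever the shifted arguments still satisfy the lattice conditions), φ(u+kτ+l, v, w; τ) = φ(u,v,w;τ), φ(u, v+kτ+l, w; τ) = φ(u,v,w;τ), and φ(u, v, w+kτ+l; τ) = φ(u,v,w;τ). -/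

import Mathlib

open Complex Real

/-- The lattice point `kτ + l` associated to `p = (k, l) ∈ ℤ²`. -/
noncomputable def latticePt (τ : ℂ) (p : ℤ × ℤ) : ℂ := (p.1 : ℂ) * τ + (p.2 : ℂ)

/-- The Weierstrass function `℘₁(z;τ)`. -/
noncomputable def wp1 (z τ : ℂ) : ℂ :=
  1 / z + ∑' p : {p : ℤ × ℤ // p ≠ (0, 0)},
    (1 / (z - latticePt τ p.1) + 1 / latticePt τ p.1 + z / (latticePt τ p.1) ^ 2)

/-- The Weierstrass function `℘₂(z;τ)`. -/
noncomputable def wp2 (z τ : ℂ) : ℂ :=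
  1 / z ^ 2 + ∑' p : {p : ℤ × ℤ // p ≠ (0, 0)},
    (1 / (z - latticePt τ p.1) ^ 2 - 1 / (latticePt τ p.1) ^ 2)

/-- The Weierstrass function `℘_m(z;τ)` for `m ≥ 3`. -/
noncomputable def wpHigh (m : ℕ) (z τ : ℂ) : ℂ :=
  ∑' p : ℤ × ℤ, 1 / (z - latticePt τ p) ^ m

/-- The Weierstrass function `℘_m(z;τ)`, `m ≥ 1`. -/
noncomputable def wp (m : ℕ) (z τ : ℂ) : ℂ :=
  if m = 1 then wp1 z τ else if m = 2 then wp2 z τ else wpHigh m z τ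

/-- The Eisenstein series `G_k(τ) = Σ_{(m,l) ≠ (0,0)} (mτ+l)^{-k}` (used for `k ≥ 3`). -/
noncomputable def Eis (k : ℕ) (τ : ℂ) : ℂ :=
  ∑' p : {p : ℤ × ℤ // p ≠ (0, 0)}, 1 / (latticePt τ p.1) ^ k

/-- The quasimodular Eisenstein series
`G₂(τ) = π²/3 + Σ_{m≠0} Σ_{l∈ℤ} (mτ+l)^{-2}` (iterated sum). -/
noncomputable def G2 (τ : ℂ) : ℂ :=
  (Real.pi : ℂ) ^ 2 / 3 +
    ∑' m : {m : ℤ // m ≠ 0}, ∑' l : ℤ, 1 / (((m : ℤ) : ℂ) * τ + (l : ℂ)) ^ 2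

/-- The function `φ(u,v,w;τ) = 2πi·∂_τ℘_m(u−v;τ) + m·G₂(τ)·℘_m(u−v;τ)
− m·G₂(τ)·(u−v)·℘_{m+1}(u−v;τ) + m·℘_{m+1}(u−v;τ)·(℘₁(u−w;τ) − ℘₁(v−w;τ))`. -/
noncomputable def phiTheta (m : ℕ) (u v w τ : ℂ) : ℂ :=
  2 * Real.pi * Complex.I * deriv (fun s => wp m (u - v) s) τ +
    (m : ℂ) * G2 τ * wp m (u - v) τ -
    (m : ℂ) * G2 τ * (u - v) * wp (m + 1) (u - v) τ +
    (m : ℂ) * wp (m + 1) (u - v) τ * (wp1 (u - w) τ - wp1 (v - w) τ)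

open Filter Topology

lemma latticePt_add (τ : ℂ) (p q : ℤ × ℤ) :
    latticePt τ (p + q) = latticePt τ p + latticePt τ q := by
  simp only [latticePt, Prod.fst_add, Prod.snd_add]
  push_cast
  ring

lemma latticePt_zero (τ : ℂ) : latticePt τ 0 = 0 := by simp [latticePt]

lemma latticePt_neg (τ : ℂ) (q : ℤ × ℤ) : latticePt τ (-q) = -latticePt τ q := by
  simp [latticePt]
  ring

lemma ne_latticePt_add {τ z : ℂ} (hz : ∀ p, z ≠ latticePt τ p) (q p : ℤ × ℤ) :
    z + latticePt τ q ≠ latticePt τ p := fun hp => hz (p - q) <| by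
  have := latticePt_add τ (p - q) q
  rw [sub_add_cancel] at this
  linear_combination hp + this

lemma abs_fst_le_norm (p : ℤ × ℤ) : |(p.1 : ℝ)| ≤ ‖p‖ := by
  simpa [Int.norm_eq_abs] using norm_fst_le p

lemma abs_snd_le_norm (p : ℤ × ℤ) : |(p.2 : ℝ)| ≤ ‖p‖ := by
  simpa [Int.norm_eq_abs] using norm_snd_le p

/-- Lattice points grow at least linearly in their coordinates. -/
lemma exists_mul_norm_le_norm_latticePt {τ : ℂ} (hτ : 0 < τ.im) :
    ∃ c > 0, ∀ p : ℤ × ℤ, c * ‖p‖ ≤ ‖latticePt τ p‖ := by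
  refine ⟨EisensteinSeries.r ⟨τ, hτ⟩, EisensteinSeries.r_pos _, fun p => ?_⟩
  rcases eq_or_ne p 0 with rfl | hp
  · simp
  · have hx : (![p.1, p.2] : Fin 2 → ℤ) ≠ 0 := by
      intro h
      apply hp
      ext
      · simpa using congrFun h 0
      · simpa using congrFun h 1
    have h := EisensteinSeries.r_mul_max_le ⟨τ, hτ⟩ hx
    rw [EisensteinSeries.norm_eq_max_natAbs] at h
    simpa [latticePt, Prod.norm_def, Int.norm_eq_abs] using h

lemma latticePt_ne_zero {τ : ℂ} (hτ : 0 < τ.im) {p : ℤ × ℤ} (hp : p ≠ 0) :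
    latticePt τ p ≠ 0 := by
  obtain ⟨c, hc, h⟩ := exists_mul_norm_le_norm_latticePt hτ
  have := (mul_pos hc (norm_pos_iff.2 hp)).trans_le (h p)
  exact norm_pos_iff.1 this

/-- The distance from `y` to a lattice point grows at least linearly in its coordinates. -/
lemma exists_mul_le_norm_sub_latticePt {τ : ℂ} (hτ : 0 < τ.im) (y : ℂ) :
    ∃ δ > 0, ∀ p : ℤ × ℤ, y ≠ latticePt τ p → δ * (1 + ‖p‖) ≤ ‖y - latticePt τ p‖ := by
  obtain ⟨c, hc, hcp⟩ := exists_mul_norm_le_norm_latticePt hτ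
  set R : ℝ := 2 * (‖y‖ + c) / c with hR
  have hfin : (Metric.closedBall (0 : ℤ × ℤ) R).Finite :=
    (isCompact_closedBall _ _).finite_of_discrete
  have hnear : ∀ᶠ δ : ℝ in 𝓝[>] 0, ∀ p ∈ Metric.closedBall (0 : ℤ × ℤ) R,
      y ≠ latticePt τ p → δ * (1 + ‖p‖) ≤ ‖y - latticePt τ p‖ := by
    refine (eventually_all_finite hfin).2 fun p _ => ?_
    by_cases hy : y = latticePt τ p
    · simp [hy]
    · have ht : Tendsto (fun δ : ℝ => δ * (1 + ‖p‖)) (𝓝[>] 0) (𝓝 0) := by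
        have : Tendsto (fun δ : ℝ => δ * (1 + ‖p‖)) (𝓝 0) (𝓝 (0 * (1 + ‖p‖))) :=
          tendsto_id.mul_const _
        rw [zero_mul] at this
        exact this.mono_left nhdsWithin_le_nhds
      filter_upwards [ht.eventually_le_const (norm_pos_iff.2 (sub_ne_zero.2 hy))] with δ hδ _
        using hδ
  have hsmall : ∀ᶠ δ : ℝ in 𝓝[>] 0, δ ≤ c / 2 :=
    nhdsWithin_le_nhds (eventually_le_nhds (by positivity))
  obtain ⟨δ, hδ, hδc, hδ0⟩ := (hnear.and (hsmall.and self_mem_nhdsWithin)).exists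
  refine ⟨δ, hδ0, fun p hp => ?_⟩
  by_cases hpR : ‖p‖ ≤ R
  · exact hδ p (by simpa using hpR) hp
  · have h1 : R * c = 2 * (‖y‖ + c) := by rw [hR]; field_simp
    have h2 : 2 * (‖y‖ + c) < ‖p‖ * c := by
      rw [← h1]
      exact mul_lt_mul_of_pos_right (not_le.1 hpR) hc
    have h3 : δ * (1 + ‖p‖) ≤ c / 2 * (1 + ‖p‖) := by gcongr
    have h4 := norm_sub_norm_le (latticePt τ p) y
    rw [norm_sub_rev] at h4
    nlinarith [hcp p, norm_nonneg y]

/-- A version of `exists_mul_le_norm_sub_latticePt` that is locally uniform in `τ`, for a point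
moving affinely with `τ`. -/
lemma exists_mul_le_norm_affine_sub_latticePt {τ : ℂ} (hτ : 0 < τ.im) (z a : ℂ) :
    ∃ δ > 0, ∀ᶠ s in 𝓝 τ, ∀ p : ℤ × ℤ, z + a * τ ≠ latticePt τ p →
      δ * (1 + ‖p‖) ≤ ‖z + a * s - latticePt s p‖ := by
  obtain ⟨δ, hδ, h⟩ := exists_mul_le_norm_sub_latticePt hτ (z + a * τ)
  refine ⟨δ / 2, by positivity, ?_⟩
  filter_upwards [Metric.ball_mem_nhds τ (show 0 < δ / (2 * (‖a‖ + 1)) by positivity)]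
    with s hs p hp
  have hs' : ‖s - τ‖ * (2 * (‖a‖ + 1)) < δ := by
    rwa [Metric.mem_ball, dist_eq_norm, lt_div_iff₀ (by positivity)] at hs
  have hsplit : z + a * τ - latticePt τ p =
      (z + a * s - latticePt s p) - (a - p.1) * (s - τ) := by
    simp only [latticePt]
    ring
  have h1 := h p hp
  have h2 : ‖z + a * τ - latticePt τ p‖ ≤
      ‖z + a * s - latticePt s p‖ + (‖a‖ + ‖p‖) * ‖s - τ‖ := by
    rw [hsplit]
    refine (norm_sub_le _ _).trans ?_
    rw [norm_mul]
    gcongr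
    refine (norm_sub_le _ _).trans ?_
    gcongr
    simpa using abs_fst_le_norm p
  nlinarith [norm_nonneg a, norm_nonneg p, norm_nonneg (s - τ),
    mul_nonneg (norm_nonneg a) (norm_nonneg p),
    mul_nonneg (mul_nonneg (norm_nonneg a) (norm_nonneg p)) (norm_nonneg (s - τ)),
    mul_lt_mul_of_pos_right hs' (show 0 < 1 + ‖p‖ by positivity)]

lemma summable_inv_one_add_norm_pow_three :
    Summable fun p : ℤ × ℤ => ((1 + ‖p‖) ^ 3)⁻¹ := by
  have h := (EisensteinSeries.summable_one_div_norm_rpow (k := 3) (by norm_num))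
  rw [← (finTwoArrowEquiv ℤ).symm.summable_iff] at h
  refine Summable.of_norm_bounded_eventually h ?_
  filter_upwards [(Set.finite_singleton (0 : ℤ × ℤ)).compl_mem_cofinite] with p hp
  have hp : 0 < ‖p‖ := norm_pos_iff.2 (by simpa using hp)
  have he : ‖(finTwoArrowEquiv ℤ).symm p‖ = ‖p‖ := by
    rw [EisensteinSeries.norm_eq_max_natAbs]
    simp [Prod.norm_def, Int.norm_eq_abs]
  simp only [Function.comp_apply, he]
  rw [Real.rpow_neg hp.le, Real.norm_of_nonneg (by positivity)]
  norm_cast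
  gcongr
  linarith

/-- Splitting off the origin in a sum over `ℤ × ℤ`. -/
lemma add_tsum_ne_zero {f : ℤ × ℤ → ℂ} (hf : Summable f) :
    f 0 + ∑' p : {p : ℤ × ℤ // p ≠ (0, 0)}, f p.1 = ∑' p, f p := by
  have h := hf.sum_add_tsum_subtype_compl {0}
  rw [Finset.sum_singleton] at h
  rw [← h]
  congr 1
  exact (Equiv.subtypeEquivRight fun p => by simp [Prod.ext_iff]).tsum_eq
    (fun p : {p : ℤ × ℤ // p ∉ ({0} : Finset (ℤ × ℤ))} => f p.1)

lemma norm_latticePt_le (τ : ℂ) (p : ℤ × ℤ) : ‖latticePt τ p‖ ≤ (‖τ‖ + 1) * (1 + ‖p‖) := by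
  have h1 : ‖(p.1 : ℂ)‖ ≤ ‖p‖ := by simpa using abs_fst_le_norm p
  have h2 : ‖(p.2 : ℂ)‖ ≤ ‖p‖ := by simpa using abs_snd_le_norm p
  have h3 : ‖latticePt τ p‖ ≤ ‖p‖ * ‖τ‖ + ‖p‖ := by
    refine (norm_add_le _ _).trans ?_
    rw [norm_mul]
    gcongr
  nlinarith [norm_nonneg τ, norm_nonneg p]

/-- The period pair `(τ, 1)`. -/
noncomputable def tauPeriodPair (τ : ℂ) (hτ : 0 < τ.im) : PeriodPair where
  ω₁ := τ
  ω₂ := 1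
  indep := by
    rw [LinearIndependent.pair_iff]
    intro s t h
    have him := congrArg Complex.im h
    have hre := congrArg Complex.re h
    simp only [real_smul, mul_one, add_im, im_ofReal_mul, ofReal_im, add_zero, zero_im,
      mul_eq_zero, hτ.ne', or_false] at him
    subst him
    simpa using hre

lemma tauPeriodPair_latticeEquivProd_symm (τ : ℂ) (hτ : 0 < τ.im) (p : ℤ × ℤ) :
    (((tauPeriodPair τ hτ).latticeEquivProd.symm p : (tauPeriodPair τ hτ).lattice) : ℂ) =
      latticePt τ p := by
  rw [PeriodPair.latticeEquiv_symm_apply]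
  simp [tauPeriodPair, latticePt]

lemma hasSum_weierstrassP_latticePt {τ : ℂ} (hτ : 0 < τ.im) (z : ℂ) :
    HasSum (fun p : ℤ × ℤ => 1 / (z - latticePt τ p) ^ 2 - 1 / latticePt τ p ^ 2)
      ((tauPeriodPair τ hτ).weierstrassP z) := by
  have h := (tauPeriodPair τ hτ).hasSum_weierstrassP z
  rw [← (tauPeriodPair τ hτ).latticeEquivProd.symm.toEquiv.hasSum_iff] at h
  refine h.congr_fun fun p => ?_
  simp [tauPeriodPair_latticeEquivProd_symm τ hτ p]

lemma wp2_eq_weierstrassP {τ : ℂ} (hτ : 0 < τ.im) (z : ℂ) :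
    wp2 z τ = (tauPeriodPair τ hτ).weierstrassP z := by
  have h := hasSum_weierstrassP_latticePt hτ z
  rw [← h.tsum_eq, ← add_tsum_ne_zero h.summable, wp2]
  simp [latticePt_zero]

lemma wp2_add_latticePt {τ : ℂ} (hτ : 0 < τ.im) (z : ℂ) (q : ℤ × ℤ) :
    wp2 (z + latticePt τ q) τ = wp2 z τ := by
  rw [wp2_eq_weierstrassP hτ, wp2_eq_weierstrassP hτ, ← tauPeriodPair_latticeEquivProd_symm τ hτ,
    PeriodPair.weierstrassP_add_coe]

lemma wpHigh_add_latticePt (m : ℕ) (z τ : ℂ) (q : ℤ × ℤ) :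
    wpHigh m (z + latticePt τ q) τ = wpHigh m z τ := by
  rw [wpHigh, wpHigh, ← (Equiv.addRight q).tsum_eq]
  simp [latticePt_add]

lemma wp_add_latticePt {m : ℕ} (hm : 2 ≤ m) {τ : ℂ} (hτ : 0 < τ.im) (z : ℂ) (q : ℤ × ℤ) :
    wp m (z + latticePt τ q) τ = wp m z τ := by
  have h1 : m ≠ 1 := by omega
  simp only [wp, if_neg h1, wp2_add_latticePt hτ, wpHigh_add_latticePt]

/-- The summand of `℘_m`, `m ≥ 2`, written as a sum over all of `ℤ²`; for `m = 2` the summand at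
the origin is right because `1 / 0 = 0`. -/
noncomputable def wpSummand (m : ℕ) (p : ℤ × ℤ) (y s : ℂ) : ℂ :=
  1 / (y - latticePt s p) ^ m - if m = 2 then 1 / latticePt s p ^ 2 else 0

lemma wp_eq_tsum_wpSummand {m : ℕ} (hm : 2 ≤ m) {s : ℂ} (hs : 0 < s.im) (y : ℂ) :
    wp m y s = ∑' p, wpSummand m p y s := by
  rw [wp, if_neg (by omega)]
  split_ifs with h
  · rw [wp2_eq_weierstrassP hs, ← (hasSum_weierstrassP_latticePt hs y).tsum_eq]
    simp [wpSummand, h]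
  · simp [wpSummand, wpHigh, h]

lemma norm_wpSummand_le_of_three_le {m : ℕ} (hm : 3 ≤ m) {p : ℤ × ℤ} {y s : ℂ} {δ : ℝ} (hδ : 0 < δ)
    (h : δ * (1 + ‖p‖) ≤ ‖y - latticePt s p‖) :
    ‖wpSummand m p y s‖ ≤ (δ ^ m)⁻¹ * ((1 + ‖p‖) ^ 3)⁻¹ := by
  rw [wpSummand, if_neg (by omega), sub_zero, one_div, norm_inv, norm_pow, ← mul_inv]
  have h1 : (1 + ‖p‖) ^ 3 ≤ (1 + ‖p‖) ^ m :=
    pow_le_pow_right₀ (by linarith [norm_nonneg p]) hm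
  apply inv_anti₀ (by positivity)
  calc δ ^ m * (1 + ‖p‖) ^ 3 ≤ δ ^ m * (1 + ‖p‖) ^ m := by gcongr
    _ = (δ * (1 + ‖p‖)) ^ m := (mul_pow _ _ _).symm
    _ ≤ ‖y - latticePt s p‖ ^ m := by gcongr

lemma norm_wpSummand_two_le {p : ℤ × ℤ} {y s : ℂ} {δ δ' B : ℝ} (hδ : 0 < δ)
    (hδ' : 0 < δ') (hy : ‖y‖ ≤ B) (hs : ‖s‖ ≤ B)
    (h : δ * (1 + ‖p‖) ≤ ‖y - latticePt s p‖) (h' : δ' * (1 + ‖p‖) ≤ ‖latticePt s p‖) :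
    ‖wpSummand 2 p y s‖ ≤ B * (3 * B + 2) * (δ ^ 2 * δ' ^ 2)⁻¹ * ((1 + ‖p‖) ^ 3)⁻¹ := by
  have hn : 0 < 1 + ‖p‖ := by positivity
  have hB : 0 ≤ B := (norm_nonneg y).trans hy
  have h1 : y - latticePt s p ≠ 0 := norm_pos_iff.1 ((mul_pos hδ hn).trans_le h)
  have h2 : latticePt s p ≠ 0 := norm_pos_iff.1 ((mul_pos hδ' hn).trans_le h')
  have hω := norm_latticePt_le s p
  have hnum : ‖2 * latticePt s p - y‖ ≤ (3 * B + 2) * (1 + ‖p‖) := by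
    refine (norm_sub_le _ _).trans ?_
    rw [norm_mul, Complex.norm_ofNat]
    nlinarith [norm_nonneg p]
  have heq : wpSummand 2 p y s =
      y * (2 * latticePt s p - y) / ((y - latticePt s p) ^ 2 * latticePt s p ^ 2) := by
    rw [wpSummand, if_pos rfl]
    field_simp
    ring
  rw [heq, norm_div, norm_mul, norm_mul, norm_pow, norm_pow]
  calc ‖y‖ * ‖2 * latticePt s p - y‖ / (‖y - latticePt s p‖ ^ 2 * ‖latticePt s p‖ ^ 2)
      ≤ B * ((3 * B + 2) * (1 + ‖p‖)) / ((δ * (1 + ‖p‖)) ^ 2 * (δ' * (1 + ‖p‖)) ^ 2) := by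
        gcongr
    _ = _ := by field_simp

/-- Locally uniform summability of the series for `℘_m` along an affine curve. -/
lemma exists_summable_bound_wpSummand {m : ℕ} (hm : 2 ≤ m) {τ : ℂ} (hτ : 0 < τ.im) (z a : ℂ)
    (hz : ∀ p, z + a * τ ≠ latticePt τ p) :
    ∃ b : ℤ × ℤ → ℝ, Summable b ∧
      ∀ᶠ s in 𝓝 τ, ∀ p, ‖wpSummand m p (z + a * s) s‖ ≤ b p := by
  obtain ⟨δ, hδ, h⟩ := exists_mul_le_norm_affine_sub_latticePt hτ z a
  rcases hm.eq_or_lt with rfl | hm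
  · obtain ⟨δ', hδ', h'⟩ := exists_mul_le_norm_affine_sub_latticePt hτ 0 0
    set B : ℝ := max (‖z + a * τ‖ + 1) (‖τ‖ + 1) with hB
    have hBy : ∀ᶠ s in 𝓝 τ, ‖z + a * s‖ ≤ B := by
      have hc : ContinuousAt (fun s => ‖z + a * s‖) τ := by fun_prop
      exact hc.eventually_le_const (by rw [hB]; exact lt_max_of_lt_left (by linarith))
    have hBs : ∀ᶠ s in 𝓝 τ, ‖s‖ ≤ B := by
      have hc : ContinuousAt (fun s : ℂ => ‖s‖) τ := by fun_prop
      exact hc.eventually_le_const (by rw [hB]; exact lt_max_of_lt_right (by linarith))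
    have hB0 : 0 ≤ B := le_max_of_le_left (by positivity)
    refine ⟨fun p => (B * (3 * B + 2) * (δ ^ 2 * δ' ^ 2)⁻¹ + (δ ^ 2)⁻¹) * ((1 + ‖p‖) ^ 3)⁻¹,
      summable_inv_one_add_norm_pow_three.mul_left _, ?_⟩
    filter_upwards [h, h', hBy, hBs] with s hs hs' hy hsB p
    rcases eq_or_ne p 0 with rfl | hp
    · have h0 := hs 0 (hz 0)
      simp only [norm_zero, add_zero, mul_one, latticePt_zero, sub_zero] at h0
      simp only [wpSummand, latticePt_zero, sub_zero, if_pos, norm_zero, add_zero, one_pow,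
        inv_one, mul_one, ne_eq, OfNat.ofNat_ne_zero, not_false_eq_true, zero_pow, div_zero,
        one_div, norm_inv, norm_pow]
      have : (‖z + a * s‖ ^ 2)⁻¹ ≤ (δ ^ 2)⁻¹ := by gcongr
      refine this.trans (le_add_of_nonneg_left (by positivity))
    · have hω : δ' * (1 + ‖p‖) ≤ ‖latticePt s p‖ := by
        simpa using hs' p (by simpa using (latticePt_ne_zero hτ hp).symm)
      refine (norm_wpSummand_two_le hδ hδ' hy hsB (hs p (hz p)) hω).trans ?_
      gcongr
      exact le_add_of_nonneg_right (by positivity)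
  · refine ⟨fun p => (δ ^ m)⁻¹ * ((1 + ‖p‖) ^ 3)⁻¹,
      summable_inv_one_add_norm_pow_three.mul_left _, ?_⟩
    filter_upwards [h] with s hs p
    exact norm_wpSummand_le_of_three_le hm hδ (hs p (hz p))

/-- Along an affine curve, `℘_m` may be differentiated term by term. -/
lemma hasSum_deriv_wp_affine {m : ℕ} (hm : 2 ≤ m) {τ : ℂ} (hτ : 0 < τ.im) (z a : ℂ)
    (hz : ∀ p, z + a * τ ≠ latticePt τ p) :
    HasSum (fun p : ℤ × ℤ => -(m * (a - p.1)) / (z + a * τ - latticePt τ p) ^ (m + 1) +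
        if m = 2 then 2 * p.1 / latticePt τ p ^ 3 else 0)
      (deriv (fun s => wp m (z + a * s) s) τ) := by
  obtain ⟨b, hb, hbound⟩ := exists_summable_bound_wpSummand hm hτ z a hz
  obtain ⟨δ, hδ, h⟩ := exists_mul_le_norm_affine_sub_latticePt hτ z a
  have him : ∀ᶠ s : ℂ in 𝓝 τ, 0 < s.im := Complex.continuous_im.continuousAt.eventually_const_lt hτ
  obtain ⟨ε, hε, hball⟩ := Metric.eventually_nhds_iff_ball.1 (hbound.and (h.and him))
  have hωne : ∀ s ∈ Metric.ball τ ε, ∀ p : ℤ × ℤ, p ≠ 0 → latticePt s p ≠ 0 := fun s hs p hp =>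
    latticePt_ne_zero (hball s hs).2.2 hp
  have hyne : ∀ s ∈ Metric.ball τ ε, ∀ p : ℤ × ℤ, z + a * s - latticePt s p ≠ 0 := fun s hs p =>
    norm_pos_iff.1 ((by positivity : 0 < δ * (1 + ‖p‖)).trans_le ((hball s hs).2.1 p (hz p)))
  have hderiv : ∀ p : ℤ × ℤ, ∀ s ∈ Metric.ball τ ε,
      HasDerivAt (fun s => wpSummand m p (z + a * s) s)
        (-(m * (a - p.1)) / (z + a * s - latticePt s p) ^ (m + 1) +
          if m = 2 then 2 * p.1 / latticePt s p ^ 3 else 0) s := by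
    intro p s hs
    have hω : HasDerivAt (fun s => latticePt s p) (p.1 : ℂ) s := by
      simpa [latticePt] using ((hasDerivAt_id s).const_mul (p.1 : ℂ)).add_const (p.2 : ℂ)
    have hy : HasDerivAt (fun s => z + a * s - latticePt s p) (a - p.1) s := by
      simpa using (((hasDerivAt_id s).const_mul a).const_add z).fun_sub hω
    have hne := hyne s hs p
    have hfirst : HasDerivAt (fun s => 1 / (z + a * s - latticePt s p) ^ m)
        (-(m * (a - p.1)) / (z + a * s - latticePt s p) ^ (m + 1)) s := by
      simp only [one_div]
      refine ((hy.fun_pow m).fun_inv (pow_ne_zero _ hne)).congr_deriv ?_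
      obtain ⟨n, rfl⟩ : ∃ n, m = n + 1 := ⟨m - 1, by omega⟩
      rw [Nat.add_sub_cancel]
      field_simp
      ring
    unfold wpSummand
    split_ifs with h2
    · rcases eq_or_ne p 0 with rfl | hp
      · simpa [latticePt_zero] using hfirst
      · have hpne := hωne s hs p hp
        have hsecond : HasDerivAt (fun s => 1 / latticePt s p ^ 2)
            (-(2 * p.1 / latticePt s p ^ 3)) s := by
          simp only [one_div]
          refine ((hω.fun_pow 2).fun_inv (pow_ne_zero _ hpne)).congr_deriv ?_
          field_simp
          push_cast
          ring
        exact (hfirst.sub hsecond).congr_deriv (by ring)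
    · simpa using hfirst
  have hsum := hasSum_deriv_of_summable_norm hb
    (F := fun p s => wpSummand m p (z + a * s) s)
    (fun p s hs => (hderiv p s hs).differentiableAt.differentiableWithinAt) Metric.isOpen_ball
    (fun p s hs => (hball s hs).1 p) (Metric.mem_ball_self hε)
  have heq : (fun s => wp m (z + a * s) s) =ᶠ[𝓝 τ] fun s => ∑' p, wpSummand m p (z + a * s) s := by
    filter_upwards [him] with s hs using wp_eq_tsum_wpSummand hm hs _
  rw [heq.deriv_eq]
  refine hsum.congr_fun fun p => ?_
  exact (hderiv p τ (Metric.mem_ball_self hε)).deriv.symm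

/-- Transformation of `∂_τ℘_m` under translation of `z` by a lattice point. -/
lemma deriv_wp_add_latticePt {m : ℕ} (hm : 2 ≤ m) {τ : ℂ} (hτ : 0 < τ.im) (z : ℂ)
    (hz : ∀ p, z ≠ latticePt τ p) (q : ℤ × ℤ) :
    deriv (fun s => wp m (z + latticePt τ q) s) τ =
      deriv (fun s => wp m z s) τ + m * q.1 * wp (m + 1) z τ := by
  have hzq := ne_latticePt_add hz q
  have hmoving := hasSum_deriv_wp_affine hm hτ (z + q.2) q.1 fun p => by
    convert hzq p using 1
    simp only [latticePt]
    ring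
  have hfixed := hasSum_deriv_wp_affine hm hτ (z + latticePt τ q) 0 (by simpa using hzq)
  have hpt : z + q.2 + q.1 * τ = z + latticePt τ q := by
    simp only [latticePt]
    ring
  have hdiff := (hfixed.sub hmoving).tsum_eq
  have hper : (fun s => wp m (z + q.2 + q.1 * s) s) =ᶠ[𝓝 τ] fun s => wp m z s := by
    filter_upwards [Complex.continuous_im.continuousAt.eventually_const_lt hτ] with s hs
    rw [← wp_add_latticePt hm hs z q]
    congr 1
    simp only [latticePt]
    ring
  rw [hper.deriv_eq] at hdiff
  simp only [zero_mul, add_zero, hpt] at hdiff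
  rw [← sub_eq_iff_eq_add', ← hdiff, ← wp_add_latticePt (by omega : 2 ≤ m + 1) hτ z q, wp,
    if_neg (by omega), if_neg (by omega), wpHigh, ← tsum_mul_left]
  refine tsum_congr fun p => ?_
  ring

lemma summable_wp1Summand {τ : ℂ} (hτ : 0 < τ.im) {z : ℂ} (hz : ∀ p, z ≠ latticePt τ p) :
    Summable fun p : ℤ × ℤ =>
      1 / (z - latticePt τ p) + 1 / latticePt τ p + z / latticePt τ p ^ 2 := by
  obtain ⟨δ, hδ, h⟩ := exists_mul_le_norm_sub_latticePt hτ z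
  obtain ⟨δ', hδ', h'⟩ := exists_mul_le_norm_sub_latticePt hτ 0
  refine Summable.of_norm_bounded_eventually
    (summable_inv_one_add_norm_pow_three.mul_left (‖z‖ ^ 2 * (δ * δ' ^ 2)⁻¹)) ?_
  filter_upwards [(Set.finite_singleton (0 : ℤ × ℤ)).compl_mem_cofinite] with p hp
  have hω : latticePt τ p ≠ 0 := latticePt_ne_zero hτ (by simpa using hp)
  have hzω : z - latticePt τ p ≠ 0 := sub_ne_zero.2 (hz p)
  have heq : 1 / (z - latticePt τ p) + 1 / latticePt τ p + z / latticePt τ p ^ 2 =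
      z ^ 2 / ((z - latticePt τ p) * latticePt τ p ^ 2) := by
    field_simp
    ring
  have h1 := h p (hz p)
  have h2 : δ' * (1 + ‖p‖) ≤ ‖latticePt τ p‖ := by simpa using h' p hω.symm
  rw [heq, norm_div, norm_mul, norm_pow, norm_pow]
  calc ‖z‖ ^ 2 / (‖z - latticePt τ p‖ * ‖latticePt τ p‖ ^ 2)
      ≤ ‖z‖ ^ 2 / (δ * (1 + ‖p‖) * (δ' * (1 + ‖p‖)) ^ 2) := by gcongr
    _ = _ := by field_simp

lemma wp1_eq_tsum {τ : ℂ} (hτ : 0 < τ.im) {z : ℂ} (hz : ∀ p, z ≠ latticePt τ p) :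
    wp1 z τ = ∑' p : ℤ × ℤ,
      (1 / (z - latticePt τ p) + 1 / latticePt τ p + z / latticePt τ p ^ 2) := by
  rw [← add_tsum_ne_zero (summable_wp1Summand hτ hz), wp1]
  simp [latticePt_zero]

/-- Symmetric partial sums of the partial fraction expansion of the cotangent. -/
lemma tendsto_sum_Icc_cot {x : ℂ} (hx : x ∈ Complex.integerComplement) :
    Tendsto (fun N : ℕ => ∑ l ∈ Finset.Icc (-(N : ℤ)) N, 1 / (x - l)) atTop
      (𝓝 (π * Complex.cot (π * x))) := by
  have h := (tendsto_logDeriv_euler_cot_sub hx).add_const (1 / x)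
  rw [sub_add_cancel] at h
  refine h.congr fun N => ?_
  induction N with
  | zero => simp
  | succ N ih =>
    rw [Finset.sum_range_succ, add_right_comm, ih, Nat.cast_add_one,
      Finset.sum_Icc_succ_eq_add_endpoints]
    simp only [cotTerm]
    push_cast
    ring

lemma cot_pi_mul_add_one (x : ℂ) : Complex.cot (π * (x + 1)) = Complex.cot (π * x) := by
  simp only [Complex.cot, mul_add, mul_one, Complex.cos_add_pi, Complex.sin_add_pi, neg_div_neg_eq]

/-- The cotangent tends to `-i` in the direction of the upper half-plane. -/
lemma tendsto_cot_add_natCast_mul {τ : ℂ} (hτ : 0 < τ.im) (z : ℂ) :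
    Tendsto (fun N : ℕ => π * Complex.cot (π * (z + N * τ))) atTop (𝓝 (-(π * I))) := by
  have him : Tendsto (fun N : ℕ => (2 * I * (π * (z + N * τ))).re) atTop atBot := by
    have : (fun N : ℕ => (2 * I * (π * (z + N * τ))).re) =
        fun N : ℕ => -(2 * π * z.im) + (N : ℝ) * (-(2 * π * τ.im)) := by
      funext N
      simp
      ring
    rw [this]
    refine tendsto_atBot_add_const_left _ _ ?_
    exact tendsto_natCast_atTop_atTop.atTop_mul_const_of_neg
      (neg_lt_zero.2 (by positivity))
  have hexp : Tendsto (fun N : ℕ => Complex.exp (2 * I * (π * (z + N * τ)))) atTop (𝓝 0) :=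
    Complex.tendsto_exp_nhds_zero_iff.2 him
  simp only [Complex.cot_eq_exp_ratio]
  have hlim := ((hexp.add_const 1).div ((hexp.const_sub 1).const_mul I) (by simp)).const_mul (π : ℂ)
  simpa using hlim

lemma tendsto_cot_sub_natCast_mul {τ : ℂ} (hτ : 0 < τ.im) (z : ℂ) :
    Tendsto (fun N : ℕ => π * Complex.cot (π * (z - N * τ))) atTop (𝓝 (π * I)) := by
  have h := (tendsto_cot_add_natCast_mul hτ (-z)).neg
  rw [neg_neg] at h
  refine h.congr fun N => ?_
  rw [show (π : ℂ) * (-z + N * τ) = -(π * (z - N * τ)) by ring, Complex.cot, Complex.cot,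
    Complex.cos_neg, Complex.sin_neg]
  ring

/-- The inner sum `Σ_l (kτ+l)⁻²` of `G₂`. -/
noncomputable def G2Row (τ : ℂ) (k : ℤ) : ℂ := ∑' l : ℤ, 1 / ((k : ℂ) * τ + l) ^ 2

lemma summable_G2Row_summand (τ : ℂ) (k : ℤ) :
    Summable fun l : ℤ => 1 / ((k : ℂ) * τ + l) ^ 2 := by
  simpa using EisensteinSeries.linear_right_summable τ k (k := 2) le_rfl

lemma G2Row_zero (τ : ℂ) : G2Row τ 0 = (π : ℂ) ^ 2 / 3 := by
  have h : HasSum (fun n : ℕ => 1 / ((n : ℂ)) ^ 2) ((π : ℂ) ^ 2 / 6) := by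
    simpa using Complex.hasSum_ofReal.2 hasSum_zeta_two
  have h' := h.of_nat_of_neg (f := fun l : ℤ => 1 / (l : ℂ) ^ 2) (by simpa using h)
  have h0 : G2Row τ 0 = ∑' l : ℤ, 1 / (l : ℂ) ^ 2 := by simp [G2Row]
  rw [h0, h'.tsum_eq]
  simp
  ring

lemma G2_eq_tsum_G2Row {τ : ℂ} (h : Summable (G2Row τ)) : G2 τ = ∑' k, G2Row τ k := by
  have hsplit := h.sum_add_tsum_subtype_compl {0}
  rw [Finset.sum_singleton, G2Row_zero] at hsplit
  rw [← hsplit, G2]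
  congr 1
  exact (Equiv.subtypeEquivRight fun k => by simp).tsum_eq
    (fun k : {k : ℤ // k ∉ ({0} : Finset ℤ)} => G2Row τ k.1)

/-- The increment of `℘₁` under a translation, summed row by row. -/
lemma hasSum_wp1_add_sub {τ : ℂ} (hτ : 0 < τ.im) {z c : ℂ} (hz : ∀ p, z ≠ latticePt τ p)
    (hzc : ∀ p, z + c ≠ latticePt τ p) :
    HasSum (fun k : ℤ => π * Complex.cot (π * (z + c - k * τ)) -
      π * Complex.cot (π * (z - k * τ)) + c * G2Row τ k) (wp1 (z + c) τ - wp1 z τ) := by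
  have hsum := (summable_wp1Summand hτ hzc).hasSum.sub (summable_wp1Summand hτ hz).hasSum
  rw [← wp1_eq_tsum hτ hzc, ← wp1_eq_tsum hτ hz] at hsum
  have hsum' : HasSum (fun p : ℤ × ℤ => (1 / (z + c - p.1 * τ - p.2) - 1 / (z - p.1 * τ - p.2)) +
      c * (1 / ((p.1 : ℂ) * τ + p.2) ^ 2)) (wp1 (z + c) τ - wp1 z τ) := by
    refine hsum.congr_fun fun p => ?_
    simp only [latticePt, sub_sub]
    ring
  refine hsum'.prod_fiberwise fun k => ?_
  have hg := (summable_G2Row_summand τ k).hasSum.mul_left c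
  refine HasSum.add ?_ hg
  have hd : Summable fun l : ℤ => 1 / (z + c - k * τ - l) - 1 / (z - k * τ - l) := by
    refine ((hsum'.summable.prod_factor k).sub hg.summable).congr fun l => ?_
    ring
  have hmem : ∀ y : ℂ, (∀ p, y ≠ latticePt τ p) → y - k * τ ∈ Complex.integerComplement := by
    rintro y hy ⟨l, hl⟩
    refine hy (k, l) ?_
    simp only [latticePt]
    linear_combination -hl
  have hlim := (tendsto_sum_Icc_cot (hmem _ hzc)).sub (tendsto_sum_Icc_cot (hmem _ hz))
  have hlim' := hd.hasSum.comp (Finset.tendsto_Icc_neg (R := ℤ))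
  have heq := tendsto_nhds_unique (hlim'.congr fun N => Finset.sum_sub_distrib _ _) hlim
  exact heq ▸ hd.hasSum

lemma hasSum_G2Row {τ : ℂ} (hτ : 0 < τ.im) {z : ℂ} (hz : ∀ p, z ≠ latticePt τ p) :
    HasSum (G2Row τ) (wp1 (z + 1) τ - wp1 z τ) := by
  have hz1 : ∀ p, z + 1 ≠ latticePt τ p := by
    simpa [latticePt] using ne_latticePt_add hz (0, 1)
  refine (hasSum_wp1_add_sub hτ hz hz1).congr_fun fun k => ?_
  rw [add_sub_right_comm, cot_pi_mul_add_one]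
  ring

lemma wp1_add_one {τ : ℂ} (hτ : 0 < τ.im) {z : ℂ} (hz : ∀ p, z ≠ latticePt τ p) :
    wp1 (z + 1) τ = wp1 z τ + G2 τ := by
  have h := hasSum_G2Row hτ hz
  rw [G2_eq_tsum_G2Row h.summable, h.tsum_eq]
  ring

lemma wp1_add_tau {τ : ℂ} (hτ : 0 < τ.im) {z : ℂ} (hz : ∀ p, z ≠ latticePt τ p) :
    wp1 (z + τ) τ = wp1 z τ + τ * G2 τ - 2 * π * I := by
  have hzτ : ∀ p, z + τ ≠ latticePt τ p := by
    simpa [latticePt] using ne_latticePt_add hz (1, 0)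
  have hG := hasSum_G2Row hτ hz
  have hG2 : HasSum (G2Row τ) (G2 τ) := G2_eq_tsum_G2Row hG.summable ▸ hG.summable.hasSum
  have hcot := ((hasSum_wp1_add_sub hτ hz hzτ).sub (hG2.mul_left τ)).comp
    (Finset.tendsto_Ico_neg (R := ℤ))
  have htel : ∀ N : ℕ, ∑ k ∈ Finset.Ico (-(N : ℤ)) N,
      (π * Complex.cot (π * (z + τ - k * τ)) - π * Complex.cot (π * (z - k * τ)) +
        τ * G2Row τ k - τ * G2Row τ k) =
      π * Complex.cot (π * (z + τ + N * τ)) - π * Complex.cot (π * (z + τ - N * τ)) := by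
    intro N
    have h := Finset.sum_Ico_int_sub N fun k : ℤ => π * Complex.cot (π * (z + τ - k * τ))
    push_cast at h
    rw [show z + τ + N * τ = z + τ - -N * τ by ring, ← h]
    refine Finset.sum_congr rfl fun k _ => ?_
    rw [show z + τ - (k + 1) * τ = z - k * τ by ring]
    ring
  have hlim := (tendsto_cot_add_natCast_mul hτ (z + τ)).sub
    (tendsto_cot_sub_natCast_mul hτ (z + τ))
  have heq := tendsto_nhds_unique (hcot.congr htel) hlim
  linear_combination heq

/-- Quasi-periodicity of `℘₁`, including Legendre's relation. -/
lemma wp1_add_latticePt {τ : ℂ} (hτ : 0 < τ.im) {z : ℂ} (hz : ∀ p, z ≠ latticePt τ p)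
    (q : ℤ × ℤ) :
    wp1 (z + latticePt τ q) τ = wp1 z τ + latticePt τ q * G2 τ - 2 * π * I * q.1 := by
  have hone : ∀ l : ℤ, ∀ y, (∀ p, y ≠ latticePt τ p) → wp1 (y + l) τ = wp1 y τ + l * G2 τ := by
    intro l
    induction l using Int.induction_on with
    | zero => simp
    | succ l ih =>
      intro y hy
      have hyl : ∀ p, y + l ≠ latticePt τ p := by
        simpa [latticePt] using ne_latticePt_add hy (0, (l : ℤ))
      have h1 := ih y hy
      have h2 := wp1_add_one hτ hyl
      push_cast at h1 ⊢
      rw [← add_assoc]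
      linear_combination h1 + h2
    | pred l ih =>
      intro y hy
      have hyl : ∀ p, y + (-l - 1) ≠ latticePt τ p := by
        simpa [latticePt] using ne_latticePt_add hy (0, -(l : ℤ) - 1)
      have h1 := ih y hy
      have h2 := wp1_add_one hτ hyl
      push_cast at h1 ⊢
      rw [show y + (-l - 1 : ℂ) + 1 = y + -l by ring] at h2
      linear_combination h1 - h2
  have htau : ∀ k : ℤ, ∀ y, (∀ p, y ≠ latticePt τ p) →
      wp1 (y + k * τ) τ = wp1 y τ + k * τ * G2 τ - 2 * π * I * k := by
    intro k
    induction k using Int.induction_on with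
    | zero => simp
    | succ k ih =>
      intro y hy
      have hyk : ∀ p, y + k * τ ≠ latticePt τ p := by
        simpa [latticePt] using ne_latticePt_add hy ((k : ℤ), 0)
      have h1 := ih y hy
      have h2 := wp1_add_tau hτ hyk
      push_cast at h1 ⊢
      rw [show y + (k + 1) * τ = y + k * τ + τ by ring]
      linear_combination h1 + h2
    | pred k ih =>
      intro y hy
      have hyk : ∀ p, y + (-k - 1) * τ ≠ latticePt τ p := by
        simpa [latticePt] using ne_latticePt_add hy (-(k : ℤ) - 1, 0)
      have h1 := ih y hy
      have h2 := wp1_add_tau hτ hyk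
      push_cast at h1 ⊢
      rw [show y + (-k - 1 : ℂ) * τ + τ = y + -k * τ by ring] at h2
      linear_combination h1 - h2
  have hzk : ∀ p, z + q.1 * τ ≠ latticePt τ p := by
    simpa [latticePt] using ne_latticePt_add hz (q.1, 0)
  have h1 := htau q.1 z hz
  have h2 := hone q.2 _ hzk
  rw [latticePt, ← add_assoc]
  linear_combination h1 + h2

/-- Ellipticity of `φ` in its first variable. -/
lemma phiTheta_add_left {m : ℕ} (hm : 2 ≤ m) {τ u v w : ℂ} (hτ : 0 < τ.im)
    (huv : ∀ p, u - v ≠ latticePt τ p) (huw : ∀ p, u - w ≠ latticePt τ p) (q : ℤ × ℤ) :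
    phiTheta m (u + latticePt τ q) v w τ = phiTheta m u v w τ := by
  rw [phiTheta, phiTheta, add_sub_right_comm u _ v, add_sub_right_comm u _ w,
    deriv_wp_add_latticePt hm hτ _ huv, wp_add_latticePt hm hτ,
    wp_add_latticePt (by omega : 2 ≤ m + 1) hτ, wp1_add_latticePt hτ huw]
  ring

/-- Ellipticity of `φ` in its second variable. -/
lemma phiTheta_add_middle {m : ℕ} (hm : 2 ≤ m) {τ u v w : ℂ} (hτ : 0 < τ.im)
    (huv : ∀ p, u - v ≠ latticePt τ p) (hvw : ∀ p, v - w ≠ latticePt τ p) (q : ℤ × ℤ) :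
    phiTheta m u (v + latticePt τ q) w τ = phiTheta m u v w τ := by
  have huvq : u - (v + latticePt τ q) = u - v + latticePt τ (-q) := by rw [latticePt_neg]; ring
  rw [phiTheta, phiTheta, huvq, add_sub_right_comm v _ w,
    deriv_wp_add_latticePt hm hτ _ huv, wp_add_latticePt hm hτ,
    wp_add_latticePt (by omega : 2 ≤ m + 1) hτ, wp1_add_latticePt hτ hvw, latticePt_neg]
  push_cast [Prod.fst_neg]
  ring

/-- Ellipticity of `φ` in its third variable. -/
lemma phiTheta_add_right {m : ℕ} {τ u v w : ℂ} (hτ : 0 < τ.im)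
    (huw : ∀ p, u - w ≠ latticePt τ p) (hvw : ∀ p, v - w ≠ latticePt τ p) (q : ℤ × ℤ) :
    phiTheta m u v (w + latticePt τ q) τ = phiTheta m u v w τ := by
  have hshift : ∀ x, x - (w + latticePt τ q) = x - w + latticePt τ (-q) := fun x => by
    rw [latticePt_neg]
    ring
  rw [phiTheta, phiTheta, hshift u, hshift v, wp1_add_latticePt hτ huw, wp1_add_latticePt hτ hvw]
  ring

/-- `φ` is elliptic in each of the variables `u`, `v`, `w`: shifting any one of
them by a lattice point `kτ + l` (whenever the shifted arguments still satisfy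
the lattice conditions) leaves `φ` unchanged. -/
theorem phiTheta_elliptic (m : ℕ) (hm : 2 ≤ m) (τ u v w : ℂ) (hτ : 0 < τ.im)
    (huv : ∀ p : ℤ × ℤ, u - v ≠ latticePt τ p)
    (huw : ∀ p : ℤ × ℤ, u - w ≠ latticePt τ p)
    (hvw : ∀ p : ℤ × ℤ, v - w ≠ latticePt τ p) :
    (∀ k l : ℤ,
      (∀ p : ℤ × ℤ, (u + ((k : ℂ) * τ + l)) - v ≠ latticePt τ p) →
      (∀ p : ℤ × ℤ, (u + ((k : ℂ) * τ + l)) - w ≠ latticePt τ p) →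
      phiTheta m (u + ((k : ℂ) * τ + l)) v w τ = phiTheta m u v w τ) ∧
    (∀ k l : ℤ,
      (∀ p : ℤ × ℤ, u - (v + ((k : ℂ) * τ + l)) ≠ latticePt τ p) →
      (∀ p : ℤ × ℤ, (v + ((k : ℂ) * τ + l)) - w ≠ latticePt τ p) →
      phiTheta m u (v + ((k : ℂ) * τ + l)) w τ = phiTheta m u v w τ) ∧
    (∀ k l : ℤ,
      (∀ p : ℤ × ℤ, u - (w + ((k : ℂ) * τ + l)) ≠ latticePt τ p) →
      (∀ p : ℤ × ℤ, v - (w + ((k : ℂ) * τ + l)) ≠ latticePt τ p) →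
      phiTheta m u v (w + ((k : ℂ) * τ + l)) τ = phiTheta m u v w τ) := by
  exact ⟨fun k l _ _ => phiTheta_add_left hm hτ huv huw (k, l),
    fun k l _ _ => phiTheta_add_middle hm hτ huv hvw (k, l),
    fun k l _ _ => phiTheta_add_right hτ huw hvw (k, l)⟩
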